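/- arXiv:1512.05948 — 7 statements merged into one kernel-verified Lean document; each statement's English description precedes it below -/
import Mathlib

section
/- The presented group G = ⟨a, b, c, d ∣ a² = b² = c² = d² = d·c·b·a = 1⟩ is isomorphic to the group K = ℤ² ⋊ {±1}. -/
/-- The group `K = ℤ² ⋊ {±1}`: underlying set `ℤ² × {±1}` with multiplication
`(m,ε)·(n,δ) = (m + ε·n, ε·δ)`, i.e. `-1` acts on `ℤ²` by negation. -/
@[ext]
structure Ksemi : Type where
  vec : Fin 2 → ℤ
  sgn : ℤˣ

namespace Ksemi

def kmul (x y : Ksemi) : Ksemi := ⟨x.vec + (x.sgn : ℤ) • y.vec, x.sgn * y.sgn⟩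
def kone : Ksemi := ⟨0, 1⟩
def kinv (x : Ksemi) : Ksemi := ⟨-((x.sgn : ℤ) • x.vec), x.sgn⟩

theorem kmul_assoc (a b c : Ksemi) : kmul (kmul a b) c = kmul a (kmul b c) := by
  unfold kmul
  refine Ksemi.ext ?_ ?_ <;>
    simp [smul_add, mul_smul, add_assoc, mul_assoc]

theorem kone_mul (a : Ksemi) : kmul kone a = a := by
  unfold kmul kone; refine Ksemi.ext ?_ ?_ <;> simp

theorem kmul_one (a : Ksemi) : kmul a kone = a := by
  unfold kmul kone; refine Ksemi.ext ?_ ?_ <;> simp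

theorem kinv_mul (a : Ksemi) : kmul (kinv a) a = kone := by
  unfold kmul kinv kone
  refine Ksemi.ext ?_ ?_ <;> simp [Int.units_mul_self]

instance : Group Ksemi where
  mul := kmul
  one := kone
  inv := kinv
  mul_assoc := kmul_assoc
  one_mul := kone_mul
  mul_one := kmul_one
  inv_mul_cancel := kinv_mul

end Ksemi

/-- The relators `a², b², c², d², d·c·b·a` in the free group on `a,b,c,d`
(encoded as `0,1,2,3 : Fin 4`). -/
def sphereRels : Set (FreeGroup (Fin 4)) :=
  {FreeGroup.of 0 * FreeGroup.of 0, FreeGroup.of 1 * FreeGroup.of 1,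
   FreeGroup.of 2 * FreeGroup.of 2, FreeGroup.of 3 * FreeGroup.of 3,
   FreeGroup.of 3 * FreeGroup.of 2 * FreeGroup.of 1 * FreeGroup.of 0}

/-- The presented group `G = ⟨a,b,c,d ∣ a² = b² = c² = d² = d·c·b·a = 1⟩`. -/
abbrev Gp : Type := PresentedGroup sphereRels

/-!
`K` acts on the plane by the translations `p ↦ v + p` and the half-turns `p ↦ v - p`, `v ∈ ℤ²`.
Sending `a, b, c, d` to the half-turns with `v = (0,0), (1,0), (1,1), (0,1)` respects the relators.

Conversely, `c = d a b` in `G`, so `a`, `b`, `d` and `d a b` are involutions there. The products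
`b a` and `d a` are inverted by `a`, and `(d a b)² = 1` says exactly that they commute. They thus
generate an image of `ℤ²` on which `a` acts by negation, which gives a homomorphism `K → G`. The two
homomorphisms are inverse to each other because they are so on generators.
-/

section Involutions

variable {H : Type*} [Group H] {a b d t x y : H}

theorem semiconjBy_mul_inv_of_mul_self_eq_one (ha : a * a = 1) (hb : b * b = 1) :
    SemiconjBy a (b * a) (b * a)⁻¹ := by
  rw [SemiconjBy, mul_inv_rev, inv_eq_of_mul_eq_one_left ha, inv_eq_of_mul_eq_one_left hb,
    mul_assoc]

theorem commute_mul_mul_of_mul_self_eq_one (ha : a * a = 1) (hb : b * b = 1) (hd : d * d = 1)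
    (hdab : d * a * b * (d * a * b) = 1) : Commute (b * a) (d * a) := by
  have reverse : b * a * d = d * a * b := by
    have h := inv_eq_of_mul_eq_one_left hdab
    rwa [mul_inv_rev, mul_inv_rev, inv_eq_of_mul_eq_one_left ha, inv_eq_of_mul_eq_one_left hb,
      inv_eq_of_mul_eq_one_left hd, ← mul_assoc] at h
  calc b * a * (d * a) = b * a * d * a := (mul_assoc _ _ _).symm
    _ = d * a * b * a := by rw [reverse]
    _ = d * a * (b * a) := mul_assoc _ _ _

/-- The homomorphism `{±1} → H` sending `-1` to an element `t` with `t² = 1`. -/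
def involutionHom (ht : t * t = 1) : ℤˣ →* H where
  toFun s := if s = 1 then 1 else t
  map_one' := if_pos rfl
  map_mul' r s := by
    rcases Int.units_eq_one_or r with rfl | rfl <;> rcases Int.units_eq_one_or s with rfl | rfl <;>
      simp [ht]

@[simp]
theorem involutionHom_neg_one (ht : t * t = 1) : involutionHom ht (-1) = t := by
  simp [involutionHom]

/-- The homomorphism `ℤ² → H`, `v ↦ x ^ v₀ * y ^ v₁`, given by two commuting elements `x`, `y`. -/
def zpowPairHom (hxy : Commute x y) : Multiplicative (Fin 2 → ℤ) →* H where
  toFun v := x ^ v.toAdd 0 * y ^ v.toAdd 1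
  map_one' := by simp
  map_mul' v w := by
    simp only [toAdd_mul, Pi.add_apply, zpow_add]
    exact (hxy.zpow_zpow _ _).mul_mul_mul_comm _ _

theorem semiconjBy_zpowPairHom_inv (hxy : Commute x y) (hx : SemiconjBy t x x⁻¹)
    (hy : SemiconjBy t y y⁻¹) (v : Multiplicative (Fin 2 → ℤ)) :
    SemiconjBy t (zpowPairHom hxy v) (zpowPairHom hxy v)⁻¹ := by
  have inv_apply : (zpowPairHom hxy v)⁻¹ = x⁻¹ ^ v.toAdd 0 * y⁻¹ ^ v.toAdd 1 := by
    rw [inv_zpow', inv_zpow']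
    exact (map_inv _ v).symm
  rw [inv_apply]
  exact (hx.zpow_right _).mul_right (hy.zpow_right _)

end Involutions

namespace Ksemi

@[simp] theorem vec_one : (1 : Ksemi).vec = 0 := rfl

@[simp] theorem sgn_one : (1 : Ksemi).sgn = 1 := rfl

@[simp] theorem vec_mul (k l : Ksemi) : (k * l).vec = k.vec + (k.sgn : ℤ) • l.vec := rfl

@[simp] theorem sgn_mul (k l : Ksemi) : (k * l).sgn = k.sgn * l.sgn := rfl

/-- The inclusion of the normal subgroup `ℤ²` of `K`: the translations of the plane. The additive
group `ℤ²` is written multiplicatively to make this a `MonoidHom`. -/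
@[simps]
def translation : Multiplicative (Fin 2 → ℤ) →* Ksemi where
  toFun v := ⟨v.toAdd, 1⟩
  map_one' := rfl
  map_mul' v w := by ext <;> simp

/-- The element `(v, -1)` of `K`: the half-turn `p ↦ v - p` of the plane, centred at `v / 2`. -/
@[simps]
def halfTurn (v : Fin 2 → ℤ) : Ksemi := ⟨v, -1⟩

theorem halfTurn_mul_halfTurn (v w : Fin 2 → ℤ) :
    halfTurn v * halfTurn w = translation (.ofAdd (v - w)) := by
  ext <;> simp [← sub_eq_add_neg, -ofAdd_sub]

theorem halfTurn_mul_self (v : Fin 2 → ℤ) : halfTurn v * halfTurn v = 1 := by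
  rw [halfTurn_mul_halfTurn, sub_self, ofAdd_zero, map_one]

theorem translation_mul_halfTurn (v w : Fin 2 → ℤ) :
    translation (.ofAdd v) * halfTurn w = halfTurn (v + w) := by
  ext <;> simp

theorem halfTurn_mul_halfTurn_mul_halfTurn (u v w : Fin 2 → ℤ) :
    halfTurn u * halfTurn v * halfTurn w = halfTurn (u - v + w) := by
  rw [halfTurn_mul_halfTurn, translation_mul_halfTurn]

theorem eq_translation_or_eq_halfTurn (k : Ksemi) :
    k = translation (.ofAdd k.vec) ∨ k = halfTurn k.vec := by
  rcases Int.units_eq_one_or k.sgn with hk | hk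
  · exact .inl (Ksemi.ext rfl hk)
  · exact .inr (Ksemi.ext rfl hk)

theorem translation_ofAdd_eq_zpow_mul_zpow (v : Fin 2 → ℤ) :
    translation (.ofAdd v) =
      (halfTurn ![1, 0] * halfTurn 0) ^ v 0 * (halfTurn ![0, 1] * halfTurn 0) ^ v 1 := by
  rw [halfTurn_mul_halfTurn, halfTurn_mul_halfTurn, ← map_zpow translation,
    ← map_zpow translation, ← map_mul, ← ofAdd_zsmul, ← ofAdd_zsmul, ← ofAdd_add]
  congr 2
  ext i
  fin_cases i <;> simp

section Hom

variable {H : Type*} [Group H]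

theorem hom_ext {φ ψ : Ksemi →* H} (h₀ : φ (halfTurn 0) = ψ (halfTurn 0))
    (h₁ : φ (halfTurn ![1, 0]) = ψ (halfTurn ![1, 0]))
    (h₂ : φ (halfTurn ![0, 1]) = ψ (halfTurn ![0, 1])) : φ = ψ := by
  have eq_on_translations (v : Fin 2 → ℤ) :
      φ (translation (.ofAdd v)) = ψ (translation (.ofAdd v)) := by
    simp only [translation_ofAdd_eq_zpow_mul_zpow, map_mul, map_zpow, h₀, h₁, h₂]
  ext k
  rcases eq_translation_or_eq_halfTurn k with hk | hk
  · rw [hk, eq_on_translations]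
  · rw [hk, ← add_zero k.vec, ← translation_mul_halfTurn, map_mul, map_mul, eq_on_translations, h₀]

/-- The universal property of `K` as the semidirect product of `ℤ²` by `{±1}`: homomorphisms `f` and
`g` on the two factors, such that `g (-1)` inverts the values of `f`, extend to `K`. -/
def lift (f : Multiplicative (Fin 2 → ℤ) →* H) (g : ℤˣ →* H)
    (hfg : ∀ v, SemiconjBy (g (-1)) (f v) (f v)⁻¹) : Ksemi →* H where
  toFun k := f (.ofAdd k.vec) * g k.sgn
  map_one' := by simp
  map_mul' k l := by
    have semiconj : SemiconjBy (g k.sgn) (f (.ofAdd l.vec)) (f (.ofAdd ((k.sgn : ℤ) • l.vec))) := by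
      rcases Int.units_eq_one_or k.sgn with hk | hk
      · simp [hk]
      · simpa [hk] using hfg (.ofAdd l.vec)
    calc f (.ofAdd (k.vec + (k.sgn : ℤ) • l.vec)) * g (k.sgn * l.sgn)
        = f (.ofAdd k.vec) * (f (.ofAdd ((k.sgn : ℤ) • l.vec)) * g k.sgn) * g l.sgn := by
          simp only [ofAdd_add, map_mul, mul_assoc]
      _ = f (.ofAdd k.vec) * g k.sgn * (f (.ofAdd l.vec) * g l.sgn) := by
          rw [← semiconj.eq]
          simp only [mul_assoc]

variable {a b d : H} (ha : a * a = 1) (hb : b * b = 1) (hd : d * d = 1)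
  (hdab : d * a * b * (d * a * b) = 1)

/-- The homomorphism `K → H` sending the half-turns `(0, -1)`, `((1,0), -1)`, `((0,1), -1)` to
`a`, `b`, `d`. Together with `hom_ext` this says that
`K = ⟨a, b, d ∣ a² = b² = d² = (d a b)² = 1⟩`. -/
def liftHalfTurns : Ksemi →* H :=
  lift (zpowPairHom (commute_mul_mul_of_mul_self_eq_one ha hb hd hdab)) (involutionHom ha) <| by
    rw [involutionHom_neg_one]
    exact semiconjBy_zpowPairHom_inv _ (semiconjBy_mul_inv_of_mul_self_eq_one ha hb)
      (semiconjBy_mul_inv_of_mul_self_eq_one ha hd)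

theorem liftHalfTurns_halfTurn (v : Fin 2 → ℤ) :
    liftHalfTurns ha hb hd hdab (halfTurn v) = (b * a) ^ v 0 * (d * a) ^ v 1 * a :=
  congrArg (_ * ·) (involutionHom_neg_one ha)

end Hom

end Ksemi

namespace Gp

open Ksemi

theorem of_mul_self (i : Fin 4) : (PresentedGroup.of i : Gp) * PresentedGroup.of i = 1 := by
  have mem_rels : FreeGroup.of i * FreeGroup.of i ∈ sphereRels := by
    fin_cases i <;> simp [sphereRels]
  exact PresentedGroup.one_of_mem mem_rels

theorem of_two_eq :
    (PresentedGroup.of 2 : Gp) =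
      PresentedGroup.of 3 * PresentedGroup.of 0 * PresentedGroup.of 1 := by
  have dcba : (PresentedGroup.of 3 * PresentedGroup.of 2 * PresentedGroup.of 1 *
      PresentedGroup.of 0 : Gp) = 1 :=
    PresentedGroup.one_of_mem (by simp [sphereRels])
  rw [mul_eq_one_iff_eq_inv, ← eq_mul_inv_iff_mul_eq, ← eq_inv_mul_iff_mul_eq] at dcba
  simpa only [inv_eq_of_mul_eq_one_left (of_mul_self _), mul_assoc] using dcba

/-- The images in `K` of the generators `a, b, c, d` of `G`: the half-turns `p ↦ v - p` where `v`
runs through the vertices of the unit square in cyclic order. -/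
def squareHalfTurn : Fin 4 → Ksemi :=
  ![halfTurn 0, halfTurn ![1, 0], halfTurn ![1, 1], halfTurn ![0, 1]]

theorem lift_squareHalfTurn_eq_one {r : FreeGroup (Fin 4)} (hr : r ∈ sphereRels) :
    FreeGroup.lift squareHalfTurn r = 1 := by
  rcases hr with rfl | rfl | rfl | rfl | rfl
  case inr.inr.inr.inr =>
    have dcb : halfTurn ![0, 1] * halfTurn ![1, 1] * halfTurn ![1, 0] = halfTurn 0 := by
      rw [halfTurn_mul_halfTurn_mul_halfTurn]
      exact congrArg halfTurn (by decide)
    simp [squareHalfTurn, dcb, halfTurn_mul_self]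
  all_goals simp [squareHalfTurn, halfTurn_mul_self]

/-- The homomorphism `G → K` determined by `squareHalfTurn`. -/
def toKsemi : Gp →* Ksemi :=
  PresentedGroup.toGroup fun _ hr ↦ lift_squareHalfTurn_eq_one hr

@[simp]
theorem toKsemi_of (i : Fin 4) : toKsemi (PresentedGroup.of i) = squareHalfTurn i :=
  PresentedGroup.toGroup.of _

/-- The homomorphism `K → G` sending the half-turns that generate `K` to `a`, `b`, `d`. -/
def ofKsemi : Ksemi →* Gp :=
  liftHalfTurns (of_mul_self 0) (of_mul_self 1) (of_mul_self 3) (of_two_eq ▸ of_mul_self 2)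

theorem ofKsemi_squareHalfTurn (i : Fin 4) :
    ofKsemi (squareHalfTurn i) = PresentedGroup.of i := by
  have map_a : ofKsemi (halfTurn 0) = .of 0 := by
    simp [ofKsemi, liftHalfTurns_halfTurn]
  have map_b : ofKsemi (halfTurn ![1, 0]) = .of 1 := by
    simp [ofKsemi, liftHalfTurns_halfTurn, mul_assoc, of_mul_self]
  have map_d : ofKsemi (halfTurn ![0, 1]) = .of 3 := by
    simp [ofKsemi, liftHalfTurns_halfTurn, mul_assoc, of_mul_self]
  have map_c : ofKsemi (halfTurn ![1, 1]) = .of 2 := by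
    have dab : halfTurn ![0, 1] * halfTurn 0 * halfTurn ![1, 0] = halfTurn ![1, 1] := by
      simp [halfTurn_mul_halfTurn_mul_halfTurn]
    rw [← dab, map_mul, map_mul, map_a, map_b, map_d, of_two_eq]
  fin_cases i
  exacts [map_a, map_b, map_c, map_d]

theorem ofKsemi_comp_toKsemi : ofKsemi.comp toKsemi = MonoidHom.id Gp :=
  PresentedGroup.ext fun i ↦ by simp [ofKsemi_squareHalfTurn]

theorem toKsemi_comp_ofKsemi : toKsemi.comp ofKsemi = MonoidHom.id Ksemi := by
  have fixes (i : Fin 4) : toKsemi (ofKsemi (squareHalfTurn i)) = squareHalfTurn i := by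
    rw [ofKsemi_squareHalfTurn, toKsemi_of]
  exact hom_ext (fixes 0) (fixes 1) (fixes 3)

end Gp

/-- `G = ⟨a,b,c,d ∣ a² = b² = c² = d² = d·c·b·a = 1⟩` is isomorphic to
`K = ℤ² ⋊ {±1}`. -/
theorem presentedGroup_iso_Ksemi : Nonempty (Gp ≃* Ksemi) := by
  exact ⟨MonoidHom.toMulEquiv Gp.toKsemi Gp.ofKsemi
    Gp.ofKsemi_comp_toKsemi Gp.toKsemi_comp_ofKsemi⟩
end

section
/- Let M and N be 2×2 integer matrices with positive determinant, and let v, w ∈ ℤ². There exists an inner automorphism ι of K with N^w = ι ∘ M^v if and only if (N = M or N = −M) and w − v ∈ 2ℤ². (This is the group-theoretic content of the statement that the bisets B_{M^v} and B_{N^w} are isomorphic if and only if M = ±N and (M^v)_* = (N^w)_*.) -/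
/-- For a 2×2 integer matrix `M` and `v ∈ ℤ²`, the map `M^v : K → K`,
`M^v(n,1) = (Mn,1)` and `M^v(n,-1) = (Mn+v,-1)`. -/
def Mv (M : Matrix (Fin 2) (Fin 2) ℤ) (v : Fin 2 → ℤ) : Ksemi → Ksemi :=
  fun x => ⟨M.mulVec x.vec + (if x.sgn = 1 then 0 else v), x.sgn⟩

/-!
Conjugation by `(t, ε)` sends `(n, δ)` to `(t + ε n - δ t, δ)`, so it turns `M^v` into
`(ε M)^(ε v + 2 t)`. Since `M^v` determines both `M` and `v`, the condition `N^w = ι ∘ M^v` for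
`ι` conjugation by `(t, ε)` says that `N = ε M` and `w = ε v + 2 t`. As `ε v ≡ v` modulo `2`,
letting `t` vary makes the second equation equivalent to `w ≡ v` modulo `2`, whatever `ε` is.
-/

section AddCommGroup

variable {A : Type*} [AddCommGroup A]

theorem exists_eq_intUnits_smul_iff {a b : A} :
    (∃ ε : ℤˣ, b = (ε : ℤ) • a) ↔ b = a ∨ b = -a := by
  constructor
  · rintro ⟨ε, rfl⟩
    rcases Int.units_eq_one_or ε with rfl | rfl <;> simp
  · rintro (rfl | rfl)
    · exact ⟨1, by simp⟩
    · exact ⟨-1, by simp⟩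

theorem exists_eq_intUnits_smul_add_two_smul_iff (ε : ℤˣ) {a b : A} :
    (∃ t : A, b = (ε : ℤ) • a + (2 : ℤ) • t) ↔ ∃ k : A, b - a = (2 : ℤ) • k := by
  rcases Int.units_eq_one_or ε with rfl | rfl
  · simp only [Units.val_one, one_smul, sub_eq_iff_eq_add']
  · refine (Equiv.subRight a).exists_congr fun t => ?_
    have shift : -a + (2 : ℤ) • t = a + (2 : ℤ) • (t - a) := by abel
    simp only [Units.val_neg, Units.val_one, neg_smul, one_smul, shift, Equiv.subRight_apply,
      sub_eq_iff_eq_add']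

end AddCommGroup

namespace Ksemi

theorem mul_def (x y : Ksemi) : x * y = ⟨x.vec + (x.sgn : ℤ) • y.vec, x.sgn * y.sgn⟩ := rfl

theorem inv_def (x : Ksemi) : x⁻¹ = ⟨-((x.sgn : ℤ) • x.vec), x.sgn⟩ := rfl

theorem conj_apply (g x : Ksemi) :
    MulAut.conj g x = ⟨g.vec + (g.sgn : ℤ) • x.vec - (x.sgn : ℤ) • g.vec, x.sgn⟩ := by
  have sgn_conj : g.sgn * x.sgn * g.sgn = x.sgn := by
    rw [mul_right_comm, Int.units_mul_self, one_mul]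
  have coe_sgn_conj : (g.sgn * x.sgn * g.sgn : ℤ) = x.sgn := mod_cast congrArg Units.val sgn_conj
  simp only [MulAut.conj_apply, mul_def, inv_def, sgn_conj, Units.val_mul, smul_neg, smul_smul,
    coe_sgn_conj, sub_eq_add_neg]

end Ksemi

section Mv

variable {M N : Matrix (Fin 2) (Fin 2) ℤ} {v w : Fin 2 → ℤ}

@[simp]
theorem Mv_mk_one (n : Fin 2 → ℤ) : Mv M v ⟨n, 1⟩ = ⟨M.mulVec n, 1⟩ := by
  simp [Mv]

@[simp]
theorem Mv_mk_neg_one (n : Fin 2 → ℤ) : Mv M v ⟨n, -1⟩ = ⟨M.mulVec n + v, -1⟩ := by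
  simp [Mv]

theorem Mv_inj : Mv M v = Mv N w ↔ M = N ∧ v = w := by
  refine ⟨fun h => ⟨Matrix.mulVec_injective (funext fun n => ?_), ?_⟩, ?_⟩
  · simpa using congrFun h ⟨n, 1⟩
  · simpa using congrFun h ⟨0, -1⟩
  · rintro ⟨rfl, rfl⟩
    rfl

theorem conj_comp_Mv (g : Ksemi) :
    ⇑(MulAut.conj g) ∘ Mv M v =
      Mv ((g.sgn : ℤ) • M) ((g.sgn : ℤ) • v + (2 : ℤ) • g.vec) := by
  funext ⟨n, δ⟩
  rcases Int.units_eq_one_or δ with rfl | rfl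
  · simp only [Function.comp_apply, Mv_mk_one, Ksemi.conj_apply, Matrix.smul_mulVec, Units.val_one,
      one_smul, add_sub_cancel_left]
  · simp only [Function.comp_apply, Mv_mk_neg_one, Ksemi.conj_apply, Matrix.smul_mulVec,
      Ksemi.mk.injEq, and_true, Units.val_neg, Units.val_one, neg_smul, one_smul, smul_add]
    abel

end Mv

theorem Mv_conj_iff_general (M N : Matrix (Fin 2) (Fin 2) ℤ) (v w : Fin 2 → ℤ) :
    (∃ g : Ksemi, Mv N w = ⇑(MulAut.conj g) ∘ Mv M v) ↔
      ((N = M ∨ N = -M) ∧ ∃ k : Fin 2 → ℤ, w - v = (2 : ℤ) • k) :=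
  calc (∃ g : Ksemi, Mv N w = ⇑(MulAut.conj g) ∘ Mv M v)
    _ ↔ ∃ g : Ksemi, N = (g.sgn : ℤ) • M ∧ w = (g.sgn : ℤ) • v + (2 : ℤ) • g.vec := by
      simp only [conj_comp_Mv, Mv_inj]
    _ ↔ ∃ ε : ℤˣ, N = (ε : ℤ) • M ∧ ∃ t : Fin 2 → ℤ, w = (ε : ℤ) • v + (2 : ℤ) • t :=
      ⟨fun ⟨⟨t, ε⟩, hN, hw⟩ => ⟨ε, hN, t, hw⟩, fun ⟨ε, hN, t, hw⟩ => ⟨⟨t, ε⟩, hN, hw⟩⟩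
    _ ↔ (N = M ∨ N = -M) ∧ ∃ k : Fin 2 → ℤ, w - v = (2 : ℤ) • k := by
      simp only [exists_eq_intUnits_smul_add_two_smul_iff, exists_and_right,
        exists_eq_intUnits_smul_iff]

/-- Let `M, N` be 2×2 integer matrices with positive determinant and
`v, w ∈ ℤ²`. There is an inner automorphism `ι` of `K = ℤ² ⋊ {±1}` with
`N^w = ι ∘ M^v` iff (`N = M` or `N = -M`) and `w - v ∈ 2ℤ²`. -/
theorem Mv_conj_iff (M N : Matrix (Fin 2) (Fin 2) ℤ)
    (hM : 0 < M.det) (hN : 0 < N.det) (v w : Fin 2 → ℤ) :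
    (∃ g : Ksemi, Mv N w = ⇑(MulAut.conj g) ∘ Mv M v) ↔
      ((N = M ∨ N = -M) ∧ ∃ k : Fin 2 → ℤ, w - v = (2 : ℤ) • k) :=
  Mv_conj_iff_general M N v w
end

section
/- The group G coincides with the subgroup of affine bijections of ℂ generated by the translation z ↦ z + 1 and the rotation z ↦ ζ·z. -/
/-!
Conjugating the translation by `a` with the rotation by `u` gives the translation by `u * a`. The
translation vectors of a group containing `z ↦ z + 1` and `z ↦ u * z` therefore form an additive
group which contains `1` and is stable under multiplication by `u` and `u⁻¹`, so they contain
`ℤ[u, u⁻¹]`. If `u` has finite order, then `u⁻¹` is a power of `u` and `ℤ[u, u⁻¹] = ℤ[u]`.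
-/

open Equiv (Perm)

theorem zpow_mulLeft {M : Type*} [Monoid M] (u : Mˣ) (j : ℤ) :
    u.mulLeft ^ j = (u ^ j).mulLeft :=
  (map_zpow (MulAction.toPermHom Mˣ M) u j).symm

/-- The vectors `a` for which the translation `z ↦ z + a` belongs to the permutation group `H`. -/
def translationVectors {G : Type*} [AddGroup G] (H : Subgroup (Perm G)) : AddSubgroup G where
  carrier := {a | Equiv.addRight a ∈ H}
  zero_mem' := by simp [one_mem]
  add_mem' {a b} ha hb := by simpa using mul_mem hb ha
  neg_mem' {a} ha := by simpa using H.inv_mem ha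

section Ring

variable {R : Type*} [Ring R]

theorem subringClosure_le_of_mul_mem_left {s : Set R} {A : AddSubgroup R} (h_one : 1 ∈ A)
    (h_mul : ∀ r ∈ s, ∀ a ∈ A, r * a ∈ A) : (Subring.closure s).toAddSubgroup ≤ A := by
  intro x hx
  refine (AddSubgroup.closure_le A).2 (fun m hm => ?_) (Subring.mem_closure_iff.1 hx)
  induction hm using Submonoid.closure_induction_left with
  | one => exact h_one
  | mul_left r hr m _ hm => exact h_mul r hr m hm

/-- The subring `ℤ[u, u⁻¹]` of `R` generated by the unit `u` and its inverse. -/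
def laurentSubring (u : Rˣ) : Subring R :=
  Subring.closure {(u : R), ((u⁻¹ : Rˣ) : R)}

theorem val_mem_laurentSubring_of_mem_zpowers {u v : Rˣ} (hv : v ∈ Subgroup.zpowers u) :
    (v : R) ∈ laurentSubring u := by
  have zpowers_le_units : Subgroup.zpowers u ≤ (laurentSubring u).toSubmonoid.units :=
    Subgroup.zpowers_le.2 <| Submonoid.mem_units_iff _ _ |>.2
      ⟨Subring.mem_closure_of_mem (by simp), Subring.mem_closure_of_mem (by simp)⟩
  exact (Submonoid.mem_units_iff _ _ |>.1 (zpowers_le_units hv)).1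

theorem laurentSubring_eq_closure_singleton {u : Rˣ} (hu : IsOfFinOrder u) :
    laurentSubring u = Subring.closure {(u : R)} := by
  obtain ⟨n, hn⟩ : u⁻¹ ∈ Submonoid.powers u :=
    hu.mem_powers_iff_mem_zpowers.2 (inv_mem (Subgroup.mem_zpowers u))
  have hmem : (u : R) ∈ Subring.closure {(u : R)} := Subring.mem_closure_of_mem rfl
  refine le_antisymm (Subring.closure_le.2 ?_) (Subring.closure_mono (by simp))
  rintro _ (rfl | rfl)
  · exact hmem
  · rw [← hn]
    exact pow_mem hmem n

theorem mulLeft_mul_addRight_mul_inv (u : Rˣ) (a : R) :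
    u.mulLeft * Equiv.addRight a * u.mulLeft⁻¹ = Equiv.addRight (u * a) := by
  rw [mul_inv_eq_iff_eq_mul]
  ext z
  simp [mul_add]

theorem mul_mem_translationVectors {H : Subgroup (Perm R)} {u : Rˣ} (hu : u.mulLeft ∈ H) {a : R}
    (ha : a ∈ translationVectors H) : u * a ∈ translationVectors H := by
  change Equiv.addRight (u * a) ∈ H
  rw [← mulLeft_mul_addRight_mul_inv]
  exact mul_mem (mul_mem hu ha) (inv_mem hu)

/-- The group of affine bijections `z ↦ u * z + a` of `R` with linear part `u ∈ U` and translation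
part `a ∈ A`, where `A` is stable under left multiplication by `U`. -/
def affineSubgroup (U : Subgroup Rˣ) (A : AddSubgroup R)
    (hUA : ∀ u ∈ U, ∀ a ∈ A, (u : R) * a ∈ A) : Subgroup (Perm R) where
  carrier := {f | ∃ u ∈ U, ∃ a ∈ A, ∀ z, f z = u * z + a}
  one_mem' := ⟨1, one_mem U, 0, zero_mem A, by simp⟩
  mul_mem' := by
    rintro f g ⟨u, hu, a, ha, hf⟩ ⟨v, hv, b, hb, hg⟩
    exact ⟨u * v, mul_mem hu hv, u * b + a, add_mem (hUA u hu b hb) ha, fun z => by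
      simp [hf, hg, mul_add, mul_assoc, add_assoc]⟩
  inv_mem' := by
    rintro f ⟨u, hu, a, ha, hf⟩
    exact ⟨u⁻¹, inv_mem hu, -((u⁻¹ : Rˣ) * a), neg_mem (hUA _ (inv_mem hu) a ha), fun z => by
      rw [Perm.inv_eq_iff_eq, hf]
      simp [mul_add]⟩

variable {U : Subgroup Rˣ} {A : AddSubgroup R} {hUA : ∀ u ∈ U, ∀ a ∈ A, (u : R) * a ∈ A}

theorem addRight_mem_affineSubgroup {a : R} (ha : a ∈ A) :
    Equiv.addRight a ∈ affineSubgroup U A hUA :=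
  ⟨1, one_mem U, a, ha, by simp⟩

theorem mulLeft_mem_affineSubgroup {u : Rˣ} (hu : u ∈ U) : u.mulLeft ∈ affineSubgroup U A hUA :=
  ⟨u, hu, 0, zero_mem A, by simp⟩

theorem affineSubgroup_le {H : Subgroup (Perm R)} (hU : ∀ u ∈ U, u.mulLeft ∈ H)
    (hA : A ≤ translationVectors H) : affineSubgroup U A hUA ≤ H := by
  rintro f ⟨u, hu, a, ha, hf⟩
  have hfactor : f = Equiv.addRight a * u.mulLeft := by
    ext z
    simp [hf]
  rw [hfactor]
  exact mul_mem (hA ha) (hU u hu)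

theorem closure_addRight_one_mulLeft (u : Rˣ) :
    Subgroup.closure {Equiv.addRight (1 : R), u.mulLeft} =
      affineSubgroup (Subgroup.zpowers u) (laurentSubring u).toAddSubgroup
        fun _ hv _ ha =>
          (laurentSubring u).mul_mem (val_mem_laurentSubring_of_mem_zpowers hv) ha := by
  set H := Subgroup.closure {Equiv.addRight (1 : R), u.mulLeft}
  have one_mem_H : 1 ∈ translationVectors H := Subgroup.mem_closure_of_mem (by simp)
  have mulLeft_mem_H : u.mulLeft ∈ H := Subgroup.mem_closure_of_mem (by simp)
  have mulLeft_zpow_mem_H (j : ℤ) : (u ^ j).mulLeft ∈ H :=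
    zpow_mulLeft u j ▸ zpow_mem mulLeft_mem_H j
  apply le_antisymm
  · rw [Subgroup.closure_le]
    rintro _ (rfl | rfl)
    · exact addRight_mem_affineSubgroup (one_mem (laurentSubring u))
    · exact mulLeft_mem_affineSubgroup (Subgroup.mem_zpowers u)
  · refine affineSubgroup_le ?_ (subringClosure_le_of_mul_mem_left one_mem_H ?_)
    · rintro _ ⟨j, rfl⟩
      exact mulLeft_zpow_mem_H j
    · rintro _ (rfl | rfl) a ha
      · exact mul_mem_translationVectors mulLeft_mem_H ha
      · exact mul_mem_translationVectors (by simpa using mulLeft_zpow_mem_H (-1)) ha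

theorem affine_group_eq_closure_general (u : Rˣ) :
    (Subgroup.closure {Equiv.addRight (1 : R), u.mulLeft} : Set (Perm R)) =
      {f | ∃ (j : ℤ) (lam : R), lam ∈ laurentSubring u ∧
        ∀ z, f z = ((u ^ j : Rˣ) : R) * z + lam} := by
  rw [closure_addRight_one_mulLeft]
  ext f
  exact Subgroup.exists_mem_zpowers

end Ring

/-- Let `k ∈ {3,4,6}`, `ζ ∈ ℂ` a primitive `k`-th root of unity, and
`Λ = ℤ[ζ]` the subring of `ℂ` generated by `ζ`. The group of affine bijections
of `ℂ` of the form `z ↦ ζ^j·z + λ` (`j ∈ ℤ`, `λ ∈ Λ`) coincides with the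
subgroup of affine bijections of `ℂ` generated by the translation `z ↦ z + 1`
and the rotation `z ↦ ζ·z`. -/
theorem affine_group_eq_closure (k : ℕ) (hk : k = 3 ∨ k = 4 ∨ k = 6) (ζ : ℂ)
    (hζ : IsPrimitiveRoot ζ k) :
    ((Subgroup.closure
        ({Equiv.addRight (1 : ℂ),
          Equiv.mulLeft₀ ζ (hζ.ne_zero (by rcases hk with h | h | h <;> omega))} :
          Set (Equiv.Perm ℂ)) : Subgroup (Equiv.Perm ℂ)) : Set (Equiv.Perm ℂ)) =
      {f : Equiv.Perm ℂ | ∃ (j : ℤ) (lam : ℂ),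
        lam ∈ Subring.closure ({ζ} : Set ℂ) ∧ ∀ z : ℂ, f z = ζ ^ j * z + lam} := by
  have hfin : IsOfFinOrder (Units.mk0 ζ (hζ.ne_zero (by omega))) :=
    Units.isOfFinOrder_val.1 (hζ.isOfFinOrder (by omega))
  have hgen := affine_group_eq_closure_general (Units.mk0 ζ (hζ.ne_zero (by omega)))
  simp only [laurentSubring_eq_closure_singleton hfin, Units.val_zpow_eq_zpow_val] at hgen
  exact hgen
end

section
/- Let a, b ∈ ℂ with a ≠ 0 and let f be the affine bijection f(z) = a·z + b of ℂ. Then f ∘ g ∘ f⁻¹ ∈ G for every g ∈ G (equivalently, f ∘ G ⊆ G ∘ f) if and only if a ∈ Λ and (1 − ζ)·b ∈ Λ. -/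
/-- The group `G` of affine bijections of `ℂ` of the form `z ↦ ζ^j·z + λ` with
`j ∈ ℤ` and `λ ∈ Λ = ℤ[ζ]`, viewed as a set of permutations of `ℂ`. -/
def affGroup (ζ : ℂ) : Set (Equiv.Perm ℂ) :=
  {f : Equiv.Perm ℂ | ∃ (j : ℤ) (lam : ℂ),
    lam ∈ Subring.closure ({ζ} : Set ℂ) ∧ ∀ z : ℂ, f z = ζ ^ j * z + lam}

/-- The affine bijection `f(z) = a·z + b` of `ℂ` (for `a ≠ 0`). -/
noncomputable def affMap (a b : ℂ) (ha : a ≠ 0) : Equiv.Perm ℂ :=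
  (Equiv.mulLeft₀ a ha).trans (Equiv.addRight b)

/-!
Conjugation by `f z = a * z + b` turns `z ↦ c * z + d` into `z ↦ c * z + (a * d + (1 - c) * b)`, so
it preserves `G` exactly when `a * d + (1 - ζ ^ j) * b ∈ Λ` for all `d ∈ Λ` and `j : ℤ`. The
translation `z ↦ z + 1` and the rotation `z ↦ ζ * z` give the two necessary conditions. They suffice
because `1 - ζ ^ j` is a multiple of `1 - ζ` in `Λ`, where `ζ` is a unit.
-/

section Subring

theorem one_sub_pow_mul_mem {R : Type*} [Ring R] {S : Subring R} {x b : R} (hx : x ∈ S)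
    (hb : (1 - x) * b ∈ S) (n : ℕ) : (1 - x ^ n) * b ∈ S := by
  rw [← geom_sum_mul_neg, mul_assoc]
  exact S.mul_mem (S.sum_mem fun i _ => S.pow_mem hx i) hb

variable {K : Type*} [DivisionRing K] {S : Subring K} {x : K}

theorem one_sub_inv_mul_mem {b : K} (hinv : x⁻¹ ∈ S) (hb : (1 - x) * b ∈ S) :
    (1 - x⁻¹) * b ∈ S := by
  rcases eq_or_ne x 0 with rfl | hx0
  · rwa [inv_zero]
  · have factor : (1 - x⁻¹) * b = -(x⁻¹ * ((1 - x) * b)) := by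
      rw [← mul_assoc, mul_sub, inv_mul_cancel₀ hx0, mul_one, ← neg_mul, neg_sub]
    rw [factor]
    exact S.neg_mem (S.mul_mem hinv hb)

theorem one_sub_zpow_mul_mem {b : K} (hx : x ∈ S) (hinv : x⁻¹ ∈ S) (hb : (1 - x) * b ∈ S)
    (j : ℤ) : (1 - x ^ j) * b ∈ S := by
  obtain ⟨n, rfl | rfl⟩ := j.eq_nat_or_neg
  · rw [zpow_natCast]
    exact one_sub_pow_mul_mem hx hb n
  · rw [zpow_neg, zpow_natCast, ← inv_pow]
    exact one_sub_pow_mul_mem hinv (one_sub_inv_mul_mem hinv hb) n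

theorem inv_mem_of_pow_eq_one {n : ℕ} (hn : n ≠ 0) (hx : x ∈ S) (hpow : x ^ n = 1) :
    x⁻¹ ∈ S := by
  have inv_eq : x⁻¹ = x ^ (n - 1) :=
    inv_eq_of_mul_eq_one_left (by rw [pow_sub_one_mul hn, hpow])
  rw [inv_eq]
  exact S.pow_mem hx _

end Subring

section Affine

variable {ζ a b c d : ℂ}

theorem affMap_apply (ha : a ≠ 0) (z : ℂ) : affMap a b ha z = a * z + b :=
  rfl

theorem affMap_inv_apply (ha : a ≠ 0) (z : ℂ) : (affMap a b ha)⁻¹ z = (z - b) / a := by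
  rw [Equiv.Perm.inv_eq_iff_eq, affMap_apply, mul_div_cancel₀ _ ha, sub_add_cancel]

theorem affMap_conj_apply (ha : a ≠ 0) {g : Equiv.Perm ℂ} (hg : ∀ z, g z = c * z + d) (z : ℂ) :
    (affMap a b ha * g * (affMap a b ha)⁻¹) z = c * z + (a * d + (1 - c) * b) := by
  simp only [Equiv.Perm.mul_apply, affMap_apply, affMap_inv_apply, hg]
  field_simp
  ring

theorem mem_affGroup_iff_of_apply {f : Equiv.Perm ℂ} {j : ℤ} (hf : ∀ z, f z = ζ ^ j * z + d) :
    f ∈ affGroup ζ ↔ d ∈ Subring.closure ({ζ} : Set ℂ) := by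
  refine ⟨?_, fun hd => ⟨j, d, hd, hf⟩⟩
  rintro ⟨i, lam, hlam, hf'⟩
  have translation_eq : d = lam := by simpa [hf] using hf' 0
  rwa [translation_eq]

theorem affMap_conj_mem_affGroup_iff (ha : a ≠ 0) {g : Equiv.Perm ℂ} {j : ℤ}
    (hg : ∀ z, g z = ζ ^ j * z + d) :
    affMap a b ha * g * (affMap a b ha)⁻¹ ∈ affGroup ζ ↔
      a * d + (1 - ζ ^ j) * b ∈ Subring.closure ({ζ} : Set ℂ) :=
  mem_affGroup_iff_of_apply (affMap_conj_apply ha hg)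

end Affine

theorem affMap_normalizes_iff_general {ζ : ℂ} (hζ : ζ ≠ 0)
    (hinv : ζ⁻¹ ∈ Subring.closure ({ζ} : Set ℂ)) {a b : ℂ} (ha : a ≠ 0) :
    (∀ g ∈ affGroup ζ, affMap a b ha * g * (affMap a b ha)⁻¹ ∈ affGroup ζ) ↔
      (a ∈ Subring.closure ({ζ} : Set ℂ) ∧
        (1 - ζ) * b ∈ Subring.closure ({ζ} : Set ℂ)) := by
  constructor
  · intro h
    have translation (z : ℂ) : affMap 1 1 one_ne_zero z = ζ ^ (0 : ℤ) * z + 1 := by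
      rw [affMap_apply, zpow_zero]
    have rotation (z : ℂ) : affMap ζ 0 hζ z = ζ ^ (1 : ℤ) * z + 0 := by
      rw [affMap_apply, zpow_one]
    have translation_conj := (affMap_conj_mem_affGroup_iff ha translation).1
      (h _ ((mem_affGroup_iff_of_apply translation).2 (one_mem _)))
    have rotation_conj := (affMap_conj_mem_affGroup_iff ha rotation).1
      (h _ ((mem_affGroup_iff_of_apply rotation).2 (zero_mem _)))
    exact ⟨by simpa using translation_conj, by simpa using rotation_conj⟩
  · rintro ⟨ha_mem, hb_mem⟩ g ⟨j, d, hd, hg⟩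
    have hζ_mem : ζ ∈ Subring.closure ({ζ} : Set ℂ) := Subring.mem_closure_of_mem rfl
    exact (affMap_conj_mem_affGroup_iff ha hg).2
      (add_mem (mul_mem ha_mem hd) (one_sub_zpow_mul_mem hζ_mem hinv hb_mem j))

/-- Let `k ∈ {3,4,6}`, `ζ` a primitive `k`-th root of unity, `Λ = ℤ[ζ]`, and
`f(z) = a·z + b` with `a ≠ 0`. Then `f ∘ g ∘ f⁻¹ ∈ G` for every `g ∈ G` iff
`a ∈ Λ` and `(1 - ζ)·b ∈ Λ`. -/
theorem affMap_normalizes_iff (k : ℕ) (hk : k = 3 ∨ k = 4 ∨ k = 6) (ζ : ℂ)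
    (hζ : IsPrimitiveRoot ζ k) (a b : ℂ) (ha : a ≠ 0) :
    (∀ g ∈ affGroup ζ, affMap a b ha * g * (affMap a b ha)⁻¹ ∈ affGroup ζ) ↔
      (a ∈ Subring.closure ({ζ} : Set ℂ) ∧
        (1 - ζ) * b ∈ Subring.closure ({ζ} : Set ℂ)) := by
  have hk0 : k ≠ 0 := by omega
  exact affMap_normalizes_iff_general (hζ.ne_zero hk0)
    (inv_mem_of_pow_eq_one hk0 (Subring.mem_closure_of_mem rfl) hζ.pow_eq_one) ha
end

section
/- In the presented group G = ⟨a, b, c, d ∣ a² = b² = c² = d² = d·c·b·a = 1⟩, the subgroup H generated by the images of b·a and a·d has index 2 in G and is free abelian of rank 2, i.e. H is isomorphic to ℤ². -/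
/-- The subgroup of `G` generated by the images of `b·a` and `a·d`. -/
def Hsub : Subgroup Gp :=
  Subgroup.closure
    {PresentedGroup.of (rels := sphereRels) 1 * PresentedGroup.of (rels := sphereRels) 0,
     PresentedGroup.of (rels := sphereRels) 0 * PresentedGroup.of (rels := sphereRels) 3}

/-!
`G` acts on the lattice `ℤ²` by point reflections `z ↦ w - z`, where the centres `w / 2` of
`a, b, c, d` are the corners of a square. The products `b * a` and `a * d` then act as the unit
translations, so they are independent, and `c = d * a * b` being an involution says exactly that
they commute: hence `H ≅ ℤ²`. Every generator lies in the coset `H * a`, so `H` has index at most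
`2`, and the character sending each generator to `-1` is trivial on `H` but not on `a`.
-/

section Group

variable {K : Type*} [Group K]

theorem index_eq_two_of_closure_involutions {S : Set K} (hS : Subgroup.closure S = ⊤)
    (hS_sq : ∀ s ∈ S, s * s = 1) {N : Subgroup K} {a : K} (ha_sq : a * a = 1) (ha : a ∉ N)
    (hN : ∀ s ∈ S, s * a ∈ N) : N.index = 2 := by
  have inv_eq_self {t : K} (ht : t * t = 1) : t⁻¹ = t := inv_eq_of_mul_eq_one_left ht
  have mul_right (k s : K) (hs : s ∈ S) (hk : k * a ∈ N ∨ k ∈ N) : k * s * a ∈ N ∨ k * s ∈ N := by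
    rcases hk with hka | hk
    · have has : a * s ∈ N := by
        simpa only [mul_inv_rev, inv_eq_self ha_sq, inv_eq_self (hS_sq s hs)]
          using inv_mem (hN s hs)
      have hks : k * s = k * a * (a * s) := by rw [mul_assoc, ← mul_assoc a, ha_sq, one_mul]
      exact Or.inr (hks ▸ mul_mem hka has)
    · exact Or.inl (mul_assoc k s a ▸ mul_mem hk (hN s hs))
  refine Subgroup.index_eq_two_iff_exists_notMem_and.2 ⟨a, ha, fun k => ?_⟩
  have hk : k ∈ Subgroup.closure S := hS ▸ Subgroup.mem_top k
  induction hk using Subgroup.closure_induction_right with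
  | one => exact Or.inr (one_mem N)
  | mul_right k _ s hs ih => exact mul_right k s hs ih
  | mul_inv_cancel k _ s hs ih => exact (inv_eq_self (hS_sq s hs)).symm ▸ mul_right k s hs ih

theorem nonempty_closure_pair_mulEquiv {x y : K} (hxy : Commute x y)
    (hindep : ∀ m n : ℤ, x ^ m * y ^ n = 1 → m = 0 ∧ n = 0) :
    Nonempty (Subgroup.closure {x, y} ≃* Multiplicative (ℤ × ℤ)) := by
  let f : Multiplicative ℤ × Multiplicative ℤ →* K :=
    (zpowersHom K x).noncommCoprod (zpowersHom K y) fun m n => hxy.zpow_zpow m.toAdd n.toAdd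
  have hf_inj : Function.Injective f := by
    rw [injective_iff_map_eq_one]
    intro p hp
    obtain ⟨hm, hn⟩ := hindep p.1.toAdd p.2.toAdd hp
    exact Prod.ext hm hn
  have hf_range : f.range = Subgroup.closure {x, y} := calc
    f.range = Subgroup.zpowers x ⊔ Subgroup.zpowers y := MonoidHom.noncommCoprod_range _ _ _
    _ = Subgroup.closure {x, y} := by
      rw [Subgroup.zpowers_eq_closure, Subgroup.zpowers_eq_closure, ← Subgroup.closure_union,
        Set.singleton_union]
  exact ⟨(((MulEquiv.prodMultiplicative ℤ ℤ).trans (MonoidHom.ofInjective hf_inj)).trans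
    (MulEquiv.subgroupCongr hf_range)).symm⟩

end Group

theorem subLeft_mul_subLeft {A : Type*} [AddCommGroup A] (w w' : A) :
    (Equiv.subLeft w * Equiv.subLeft w' : Equiv.Perm A) = Equiv.addRight (w - w') := by
  ext z
  simp only [Equiv.Perm.mul_apply, Equiv.subLeft_apply, Equiv.coe_addRight]
  abel

/-- The tuple `s` satisfies the defining relations of `Gp`, i.e. it is the image of the
generators `a, b, c, d` under a homomorphism from `Gp`. -/
structure SatisfiesSphereRels {K : Type*} [Group K] (s : Fin 4 → K) : Prop where
  mul_self (i : Fin 4) : s i * s i = 1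
  prod_eq_one : s 3 * s 2 * s 1 * s 0 = 1

namespace SatisfiesSphereRels

variable {K : Type*} [Group K] {s : Fin 4 → K}

theorem inv_eq_self (h : SatisfiesSphereRels s) (i : Fin 4) : (s i)⁻¹ = s i :=
  inv_eq_of_mul_eq_one_left (h.mul_self i)

theorem apply_two_eq (h : SatisfiesSphereRels s) : s 2 = s 3 * s 0 * s 1 := by
  have h_inv : s 2 = (s 3)⁻¹ * (s 0)⁻¹ * (s 1)⁻¹ := by
    rw [eq_mul_inv_iff_mul_eq, eq_mul_inv_iff_mul_eq]
    exact eq_inv_of_mul_eq_one_right (by simpa only [mul_assoc] using h.prod_eq_one)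
  simpa only [h.inv_eq_self] using h_inv

theorem commute_translations (h : SatisfiesSphereRels s) :
    Commute (s 1 * s 0) (s 0 * s 3) := by
  have h_two : s 3 * s 0 * s 1 = s 1 * s 0 * s 3 := by
    simpa only [h.apply_two_eq, mul_inv_rev, h.inv_eq_self, mul_assoc] using (h.inv_eq_self 2).symm
  calc s 1 * s 0 * (s 0 * s 3)
      = s 1 * (s 0 * s 0) * s 3 := by simp only [mul_assoc]
    _ = s 0 * (s 3 * s 3) * s 0 * s 1 * s 3 := by simp only [h.mul_self, mul_one, one_mul]
    _ = s 0 * s 3 * (s 3 * s 0 * s 1) * s 3 := by simp only [mul_assoc]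
    _ = s 0 * s 3 * (s 1 * s 0) * (s 3 * s 3) := by simp only [h_two, mul_assoc]
    _ = s 0 * s 3 * (s 1 * s 0) := by rw [h.mul_self, mul_one]

theorem lift_eq_one (h : SatisfiesSphereRels s) {r : FreeGroup (Fin 4)}
    (hr : r ∈ sphereRels) : FreeGroup.lift s r = 1 := by
  rcases hr with rfl | rfl | rfl | rfl | rfl <;>
    simp only [map_mul, FreeGroup.lift_apply_of, h.mul_self, h.prod_eq_one]

end SatisfiesSphereRels

namespace Gp

/-- The generators `a, b, c, d` of `Gp`, indexed by `0, 1, 2, 3`. -/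
abbrev gen (i : Fin 4) : Gp := PresentedGroup.of i

theorem satisfiesSphereRels_gen : SatisfiesSphereRels gen where
  mul_self i := by
    have h_mem : FreeGroup.of i * FreeGroup.of i ∈ sphereRels := by
      fin_cases i <;> simp [sphereRels]
    exact PresentedGroup.one_of_mem h_mem
  prod_eq_one := by
    have h_mem :
        FreeGroup.of 3 * FreeGroup.of 2 * FreeGroup.of 1 * FreeGroup.of 0 ∈ sphereRels := by
      simp [sphereRels]
    exact PresentedGroup.one_of_mem h_mem

/-- The homomorphism from `Gp` sending the generators to a given tuple that satisfies the relations: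
the universal property of the presentation. -/
def lift {K : Type*} [Group K] {s : Fin 4 → K} (h : SatisfiesSphereRels s) : Gp →* K :=
  PresentedGroup.toGroup fun _ hr => h.lift_eq_one hr

theorem lift_gen {K : Type*} [Group K] {s : Fin 4 → K} (h : SatisfiesSphereRels s) (i : Fin 4) :
    lift h (gen i) = s i :=
  PresentedGroup.toGroup.of _

theorem gen_mul_gen_zero_mem_Hsub (i : Fin 4) : gen i * gen 0 ∈ Hsub := by
  have h := satisfiesSphereRels_gen
  have hba : gen 1 * gen 0 ∈ Hsub := Subgroup.subset_closure (by simp)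
  have hda : gen 3 * gen 0 ∈ Hsub := by
    have had : gen 0 * gen 3 ∈ Hsub := Subgroup.subset_closure (by simp)
    simpa only [mul_inv_rev, h.inv_eq_self] using inv_mem had
  have hca : gen 2 * gen 0 ∈ Hsub := by
    rw [h.apply_two_eq, mul_assoc]
    exact mul_mem hda hba
  fin_cases i
  · exact h.mul_self 0 ▸ one_mem Hsub
  · exact hba
  · exact hca
  · exact hda

theorem gen_zero_notMem_Hsub : gen 0 ∉ Hsub := by
  have h_neg : SatisfiesSphereRels (fun _ => (-1 : ℤˣ)) := ⟨fun _ => by simp, by simp⟩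
  have h_le : Hsub ≤ (lift h_neg).ker := by
    refine (Subgroup.closure_le _).2 ?_
    rintro _ (rfl | rfl) <;> simp [lift_gen]
  intro h_mem
  have h_sign : (-1 : ℤˣ) = 1 := (lift_gen h_neg 0).symm.trans (h_le h_mem)
  exact absurd h_sign (by decide)

section PointReflections

variable {A : Type*} [AddCommGroup A] (u v : A)

/-- The point reflections `z ↦ w - z` of `A` for `w = 0, u, u - v, -v`. These values of `w` make
`b * a` and `a * d` act as the translations by `u` and `v`. -/
def reflections : Fin 4 → Equiv.Perm A :=
  ![Equiv.subLeft 0, Equiv.subLeft u, Equiv.subLeft (u - v), Equiv.subLeft (-v)]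

theorem satisfiesSphereRels_reflections : SatisfiesSphereRels (reflections u v) where
  mul_self i := by
    fin_cases i <;> simp [reflections, subLeft_mul_subLeft]
  prod_eq_one := by
    calc reflections u v 3 * reflections u v 2 * reflections u v 1 * reflections u v 0
        = Equiv.addRight (-v - (u - v)) * Equiv.addRight u := by
          simp [reflections, subLeft_mul_subLeft, mul_assoc]
      _ = Equiv.addRight (u + (-v - (u - v))) := (Equiv.addRight_add _ _).symm
      _ = 1 := by
          rw [show u + (-v - (u - v)) = 0 by abel, Equiv.addRight_zero]

theorem lift_reflections_zpow_mul_zpow (m n : ℤ) :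
    lift (satisfiesSphereRels_reflections u v) ((gen 1 * gen 0) ^ m * (gen 0 * gen 3) ^ n) =
      Equiv.addRight (m • u + n • v) := by
  simp [lift_gen, reflections, subLeft_mul_subLeft, add_comm (m • u)]

end PointReflections

theorem eq_zero_of_zpow_mul_zpow_eq_one (m n : ℤ)
    (h : (gen 1 * gen 0) ^ m * (gen 0 * gen 3) ^ n = 1) : m = 0 ∧ n = 0 := by
  have h_act := lift_reflections_zpow_mul_zpow ((1, 0) : ℤ × ℤ) (0, 1) m n
  rw [h, map_one] at h_act
  simpa [Prod.ext_iff, eq_comm] using Equiv.congr_fun h_act 0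

end Gp

/-- In `G = ⟨a,b,c,d ∣ a² = b² = c² = d² = d·c·b·a = 1⟩`, the subgroup `H`
generated by the images of `b·a` and `a·d` has index `2` and is free abelian
of rank `2`, i.e. `H ≅ ℤ²`. -/
theorem index_two_free_abelian_subgroup :
    Hsub.index = 2 ∧ Nonempty (Hsub ≃* Multiplicative (ℤ × ℤ)) := by
  have h := Gp.satisfiesSphereRels_gen
  constructor
  · refine index_eq_two_of_closure_involutions (PresentedGroup.closure_range_of sphereRels) ?_
      (h.mul_self 0) Gp.gen_zero_notMem_Hsub ?_
    · exact Set.forall_mem_range.2 h.mul_self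
    · exact Set.forall_mem_range.2 Gp.gen_mul_gen_zero_mem_Hsub
  · exact nonempty_closure_pair_mulEquiv h.commute_translations Gp.eq_zero_of_zpow_mul_zpow_eq_one
end

section
/- Let Q be a strongly connected quiver and suppose some vertex z has two distinct outgoing arrows, i.e. there are arrows e₁ : z → w₁ and e₂ : z → w₂ with (w₁, e₁) ≠ (w₂, e₂) as dependent pairs. Then for every ordered pair of vertices (u, v) there exist an integer n ≥ 1 and two distinct paths from u to v, both of length n. -/
/-!
Let `c` and `d` be closed paths at `z` that start with the two different arrows. Then `c.comp d` and
`d.comp c` have the same length, and they are distinct because their first arrows differ.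
Precomposing with a path `u → z` and postcomposing with a path `z → v` preserves both
properties.
-/

section

open Quiver

variable {V : Type*} [Quiver V]

theorem sigma_path_eq_of_comp_eq_comp {a b b' c : V} {p : Path a b} {p' : Path a b'}
    {r : Path b c} {r' : Path b' c} (hlen : p.length = p'.length) (h : p.comp r = p'.comp r') :
    (⟨b, p⟩ : Σ x, Path a x) = ⟨b', p'⟩ := by
  have hlen_suffix : r.length = r'.length := by
    have hlen_comp := congrArg Path.length h
    rw [Path.length_comp, Path.length_comp, hlen] at hlen_comp
    exact Nat.add_left_cancel hlen_comp
  induction r with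
  | nil =>
    cases r' with
    | nil => exact congrArg (Sigma.mk b) h
    | cons r' e' => exact absurd hlen_suffix (Nat.succ_ne_zero _).symm
  | cons r e ih =>
    cases r' with
    | nil => exact absurd hlen_suffix (Nat.succ_ne_zero _)
    | cons r' e' =>
      rw [Path.comp_cons, Path.comp_cons] at h
      obtain rfl := Path.obj_eq_of_cons_eq_cons h
      exact ih (eq_of_heq (Path.heq_of_cons_eq_cons h)) (Nat.succ.inj hlen_suffix)

theorem sigma_hom_eq_of_toPath_comp_eq_toPath_comp {a b b' c : V} {e : a ⟶ b} {e' : a ⟶ b'}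
    {r : Path b c} {r' : Path b' c} (h : e.toPath.comp r = e'.toPath.comp r') :
    (⟨b, e⟩ : Σ x, a ⟶ x) = ⟨b', e'⟩ := by
  have hprefix : (⟨b, e.toPath⟩ : Σ x, Path a x) = ⟨b', e'.toPath⟩ :=
    sigma_path_eq_of_comp_eq_comp rfl h
  obtain ⟨rfl, htoPath⟩ := Sigma.mk.inj hprefix
  exact congrArg (Sigma.mk b) (eq_of_heq (Path.hom_heq_of_cons_eq_cons (eq_of_heq htoPath)))

theorem exists_closed_paths_ne_of_branching {z : V} {p q : Σ w, z ⟶ w} (hpq : p ≠ q)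
    (hp : Reachable p.1 z) (hq : Reachable q.1 z) :
    ∃ C D : Path z z, C ≠ D ∧ 1 ≤ C.length ∧ C.length = D.length := by
  obtain ⟨r⟩ := hp
  obtain ⟨s⟩ := hq
  let c : Path z z := p.2.toPath.comp r
  let d : Path z z := q.2.toPath.comp s
  refine ⟨c.comp d, d.comp c, fun h => hpq ?_, ?_, ?_⟩
  · rw [Path.comp_assoc, Path.comp_assoc] at h
    exact sigma_hom_eq_of_toPath_comp_eq_toPath_comp h
  · simp only [c, Path.length_comp, Path.length_toPath]
    omega
  · rw [Path.length_comp c d, Path.length_comp d c, add_comm]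

theorem strongly_connected_branching_two_paths_general {u z v : V} {p q : Σ w, z ⟶ w}
    (hpq : p ≠ q) (hp : Reachable p.1 z) (hq : Reachable q.1 z)
    (huz : Reachable u z) (hzv : Reachable z v) :
    ∃ n : ℕ, 1 ≤ n ∧ ∃ P Q : Path u v, P ≠ Q ∧ P.length = n ∧ Q.length = n := by
  obtain ⟨a⟩ := huz
  obtain ⟨b⟩ := hzv
  obtain ⟨C, D, hCD, hpos, hlen⟩ := exists_closed_paths_ne_of_branching hpq hp hq
  refine ⟨a.length + (C.length + b.length), by omega,
    a.comp (C.comp b), a.comp (D.comp b), ?_, ?_, ?_⟩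
  · rwa [Ne, Path.comp_inj_right, Path.comp_inj_left]
  · rw [Path.length_comp, Path.length_comp]
  · rw [Path.length_comp, Path.length_comp, hlen]

end

/-- Let `Q` be a strongly connected quiver (every ordered pair of vertices is
joined by a path) and suppose some vertex `z` has two distinct outgoing arrows
(distinct as dependent pairs `(target, arrow)`). Then for every ordered pair of
vertices `(u, v)` there are an integer `n ≥ 1` and two distinct paths from `u`
to `v`, both of length `n`. -/
theorem strongly_connected_branching_two_paths
    {V : Type*} [Quiver V]
    (hconn : ∀ u v : V, Nonempty (Quiver.Path u v))
    (z : V) (p q : Σ w : V, z ⟶ w) (hpq : p ≠ q) :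
    ∀ u v : V, ∃ n : ℕ, 1 ≤ n ∧
      ∃ P Q : Quiver.Path u v, P ≠ Q ∧ P.length = n ∧ Q.length = n :=
  fun u v => strongly_connected_branching_two_paths_general hpq
    (hconn p.1 z) (hconn q.1 z) (hconn u z) (hconn z v)
end

section
/- Let Q be a quiver, z a vertex, and p ≠ q two distinct closed paths at z of the same length L ≥ 1. Then for every natural number k the map sending a word (x₁, …, x_k) ∈ {p, q}^k to the concatenated closed path x₁ · x₂ · ⋯ · x_k at z is injective; in particular, there are at least 2^k distinct closed paths at z of length k·L, so the number of closed paths at z of length n grows exponentially in n. -/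
universe u v

universe w

/-!
Cutting `x₁ ⋯ x_k` into consecutive blocks of the prescribed lengths `|x₁|, …, |x_k|` recovers every
factor, so a word in closed paths of one common length is determined by its concatenation.
-/

section ConcatenationOfClosedPaths

open Quiver (Path)
open Quiver.Path (comp comp_inj' length length_comp nil)

variable {V : Type u} [Quiver.{v} V] {y z : V}

theorem path_length_foldl_comp (a : Path y z) (l : List (Path z z)) :
    (l.foldl comp a).length = a.length + (l.map length).sum := by
  induction l generalizing a with
  | nil => simp
  | cons x l ih => simp [ih, add_assoc]

theorem path_foldl_comp_inj {a b : Path y z} {l m : List (Path z z)}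
    (hab : a.length = b.length) (hlm : l.map length = m.map length) :
    l.foldl comp a = m.foldl comp b ↔ a = b ∧ l = m := by
  induction l generalizing a b m with
  | nil =>
    obtain rfl : m = [] := by simpa using hlm.symm
    simp
  | cons x l ih =>
    obtain ⟨x', m, rfl, hx, hlm⟩ := List.map_eq_cons_iff.1 hlm.symm
    have hcomp : (a.comp x).length = (b.comp x').length := by
      rw [length_comp, length_comp, hab, hx]
    rw [List.foldl_cons, List.foldl_cons, ih hcomp hlm.symm, comp_inj' hab, List.cons.injEq,
      and_assoc]

variable {ι : Type w} {c : ι → Path z z} {L : ℕ}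

theorem path_length_foldl_comp_ofFn (hlen : ∀ i, (c i).length = L) {k : ℕ} (x : Fin k → ι) :
    ((List.ofFn fun i => c (x i)).foldl comp nil).length = k * L := by
  simp [path_length_foldl_comp, List.map_ofFn, Function.comp_def, hlen]

theorem path_foldl_comp_ofFn_injective (hc : Function.Injective c)
    (hlen : ∀ i, (c i).length = L) (k : ℕ) :
    Function.Injective fun x : Fin k → ι => (List.ofFn fun i => c (x i)).foldl comp nil := by
  intro x x' hxx'
  have hlengths : (List.ofFn fun i => c (x i)).map length =
      (List.ofFn fun i => c (x' i)).map length := by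
    simp [List.map_ofFn, Function.comp_def, hlen]
  have hwords := ((path_foldl_comp_inj rfl hlengths).1 hxx').2
  exact hc.comp_left (List.ofFn_injective hwords)

theorem lift_mk_pow_le_lift_mk_path_length_eq (hc : Function.Injective c)
    (hlen : ∀ i, (c i).length = L) (k : ℕ) :
    Cardinal.lift.{max u v} (Cardinal.mk ι) ^ k ≤
      Cardinal.lift.{w} (Cardinal.mk {P : Path z z // P.length = k * L}) := by
  calc Cardinal.lift.{max u v} (Cardinal.mk ι) ^ k
    _ = Cardinal.lift.{max u v} (Cardinal.mk (Fin k → ι)) := by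
      simp [← Cardinal.power_natCast, Cardinal.lift_power]
    _ ≤ Cardinal.lift.{w} (Cardinal.mk {P : Path z z // P.length = k * L}) :=
      Cardinal.lift_mk_le_lift_mk_of_injective <|
        (path_foldl_comp_ofFn_injective hc hlen k).codRestrict (path_length_foldl_comp_ofFn hlen)

end ConcatenationOfClosedPaths

theorem two_cycles_exponential_growth_general
    {V : Type u} [Quiver.{v} V] {z : V} {L : ℕ} {ι : Type w} {c : ι → Quiver.Path z z}
    (hc : Function.Injective c) (hlen : ∀ i, (c i).length = L) (k : ℕ) :
    Function.Injective (fun x : Fin k → ι =>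
      (List.ofFn fun i => c (x i)).foldl Quiver.Path.comp Quiver.Path.nil) ∧
    (∀ x : Fin k → ι,
      ((List.ofFn fun i => c (x i)).foldl Quiver.Path.comp Quiver.Path.nil).length = k * L) ∧
    Cardinal.lift.{max u v} (Cardinal.mk ι) ^ k ≤
      Cardinal.lift.{w} (Cardinal.mk {P : Quiver.Path z z // P.length = k * L}) :=
  ⟨path_foldl_comp_ofFn_injective hc hlen k, path_length_foldl_comp_ofFn hlen,
    lift_mk_pow_le_lift_mk_path_length_eq hc hlen k⟩

/-- Let `Q` be a quiver, `z` a vertex, and `p ≠ q` two distinct closed paths at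
`z` of the same length `L ≥ 1`. For every `k`, the map sending a word
`(x₁, …, x_k) ∈ {p,q}^k` to the concatenated closed path `x₁ · x₂ · ⋯ · x_k`
at `z` is injective; each such concatenation has length `k·L`, and hence there
are at least `2^k` distinct closed paths at `z` of length `k·L` (so the number
of closed paths at `z` grows exponentially). -/
theorem two_cycles_exponential_growth
    {V : Type u} [Quiver.{v + 1} V] (z : V) (L : ℕ) (hL : 1 ≤ L)
    (p q : Quiver.Path z z) (hpq : p ≠ q)
    (hp : p.length = L) (hq : q.length = L) (k : ℕ) :
    Function.Injective (fun w : Fin k → Bool =>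
      (List.ofFn fun i => if w i then p else q).foldl Quiver.Path.comp
        Quiver.Path.nil) ∧
    (∀ w : Fin k → Bool,
      ((List.ofFn fun i => if w i then p else q).foldl Quiver.Path.comp
        Quiver.Path.nil).length = k * L) ∧
    2 ^ k ≤ Cardinal.mk {P : Quiver.Path z z // P.length = k * L} := by
  have hc : Function.Injective fun b : Bool => if b then p else q :=
    Bool.injective_iff.2 (by simpa using hpq.symm)
  simpa using two_cycles_exponential_growth_general hc (by simp [hp, hq]) k
end
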